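/- For all integers p ≥ 1, t_0 ≥ 2 and t_1 ≥ 2, the list L consisting of p−1 copies of −2, then the entry −3, then t_0−2 copies of −2, then the entry −(p+2), then t_1−1 copies of −2, has negative continued fraction L⁻ = −1 − (t_0 + t_1 + p·t_0·t_1)/(−1 + p·t_0 + p²·t_0·t_1), and N(L) = 4(p+1). (This is the computation for case (d) with t_0, t_1 > 1 in the classification.) -/

import Mathlib

/-- The negative continued fraction `[r_0, …, r_k]⁻` of a list of rationals:
`[r_k]⁻ = r_k` and `[r_i, …, r_k]⁻ = r_i − 1/[r_{i+1}, …, r_k]⁻`.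
(The value on the empty list is an irrelevant junk value.) -/
def ncf : List ℚ → ℚ
  | [] => 0
  | [r] => r
  | r :: rs => r - 1 / ncf rs

/-- `N([r_0, …, r_k]) = |(r_0+1)(r_1+1)⋯(r_{k−1}+1)·r_k|`, with `N([r]) = |r|`. -/
def Nval : List ℤ → ℤ
  | [] => 1
  | [r] => |r|
  | r :: rs => |r + 1| * Nval rs

/-!
Write a negative continued fraction with entries at most `-2` as `-1 - x`, with `x > 0`. Putting
the entry `-(m + 2)` in front of it turns `x` into `m + 1 / (1 + 1 / x)`; in particular each entry
`-2` adds `1` to `1 / x`. So in the coordinate `x` the list `L` becomes an ordinary continued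
fraction, `1 / x = p - 1 + 1 / (1 + 1 / (t₀ - 1 + 1 / (p + 1 / t₁)))`. As for `N(L)`, the entries
`-2` other than the last contribute the factor `|-2 + 1| = 1`.
-/

-- For `l = []` this relies on the junk values `ncf [] = 0` and `1 / 0 = 0`.
theorem ncf_cons (r : ℚ) (l : List ℚ) : ncf (r :: l) = r - 1 / ncf l := by
  cases l <;> simp [ncf]

section

variable {l : List ℚ} {x : ℚ}

theorem ncf_neg_add_two_cons (m : ℚ) (hx : 0 < x) (hl : ncf l = -1 - x) :
    ncf (-(m + 2) :: l) = -1 - (m + (1 + x⁻¹)⁻¹) := by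
  have hneg : ncf l = -(1 + x) := by rw [hl]; ring
  rw [ncf_cons, hneg]
  field_simp
  ring

theorem ncf_replicate_neg_two_append (n : ℕ) (hx : 0 < x) (hl : ncf l = -1 - x) :
    ncf (List.replicate n (-2) ++ l) = -1 - (n + x⁻¹)⁻¹ := by
  induction n with
  | zero => simpa using hl
  | succ n ih =>
    have hcons := ncf_neg_add_two_cons 0 (by positivity) ih
    rw [zero_add, zero_add, inv_inv] at hcons
    rw [List.replicate_succ, List.cons_append, hcons]
    push_cast
    ring

theorem ncf_neg_add_two_cons_replicate_neg_two_append (m : ℚ) (n : ℕ) (hx : 0 < x)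
    (hl : ncf l = -1 - x) :
    ncf (-(m + 2) :: (List.replicate n (-2) ++ l)) = -1 - (m + (n + 1 + x⁻¹)⁻¹) := by
  rw [ncf_neg_add_two_cons m (by positivity) (ncf_replicate_neg_two_append n hx hl), inv_inv]
  ring

end

theorem ncf_neg_twos_with_two_entries (a b c : ℕ) {m k : ℚ} (hm : 0 ≤ m) (hk : 0 ≤ k) :
    ncf (List.replicate a (-2) ++ [-(m + 2)] ++ List.replicate b (-2) ++ [-(k + 2)] ++
        List.replicate (c + 1) (-2)) =
      -1 - (a + (m + (b + 1 + (k + (c + 2 : ℚ)⁻¹)⁻¹)⁻¹)⁻¹)⁻¹ := by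
  have hlast : ncf [-2] = -1 - 1 := by norm_num [ncf]
  have htail := ncf_neg_add_two_cons_replicate_neg_two_append k c one_pos hlast
  have hmid := ncf_neg_add_two_cons_replicate_neg_two_append m b (by positivity) htail
  have hlist := ncf_replicate_neg_two_append a (by positivity) hmid
  have hc : (c : ℚ) + 1 + 1⁻¹ = c + 2 := by norm_num [add_assoc]
  simpa only [List.replicate_succ', List.append_assoc, List.cons_append, List.nil_append, hc]
    using hlist

theorem Nval_append_singleton (l : List ℤ) (r : ℤ) :
    Nval (l ++ [r]) = |(l.map (· + 1)).prod * r| := by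
  induction l with
  | nil => simp [Nval]
  | cons a l ih =>
    rw [List.cons_append, Nval, ih, ← abs_mul, List.map_cons, List.prod_cons, mul_assoc]
    simp

theorem Nval_neg_twos_with_two_entries (a b c : ℕ) (r s : ℤ) :
    Nval (List.replicate a (-2) ++ [r] ++ List.replicate b (-2) ++ [s] ++
        List.replicate (c + 1) (-2)) = 2 * |r + 1| * |s + 1| := by
  rw [List.replicate_succ', ← List.append_assoc, Nval_append_singleton]
  have habs : |(-2 + 1 : ℤ)| = 1 := by norm_num
  simp only [List.map_append, List.map_replicate, List.map_cons, List.map_nil,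
    List.prod_append, List.prod_replicate, List.prod_singleton, abs_mul, abs_pow, habs,
    one_pow, one_mul, mul_one, abs_neg, Nat.abs_ofNat]
  ring

theorem stmt6 (p t0 t1 : ℤ) (hp : 1 ≤ p) (h0 : 2 ≤ t0) (h1 : 2 ≤ t1) :
    ncf ((List.replicate (p - 1).toNat (-2 : ℤ) ++ [-3] ++
            List.replicate (t0 - 2).toNat (-2 : ℤ) ++ [-(p + 2)] ++
            List.replicate (t1 - 1).toNat (-2 : ℤ)).map (fun r : ℤ => (r : ℚ))) =
        -1 - ((t0 : ℚ) + (t1 : ℚ) + (p : ℚ) * t0 * t1) /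
          (-1 + (p : ℚ) * t0 + (p : ℚ) ^ 2 * t0 * t1) ∧
      Nval (List.replicate (p - 1).toNat (-2 : ℤ) ++ [-3] ++
          List.replicate (t0 - 2).toNat (-2 : ℤ) ++ [-(p + 2)] ++
          List.replicate (t1 - 1).toNat (-2 : ℤ)) = 4 * (p + 1) := by
  obtain ⟨a, rfl⟩ : ∃ a : ℕ, p = a + 1 := ⟨(p - 1).toNat, by omega⟩
  obtain ⟨b, rfl⟩ : ∃ b : ℕ, t0 = b + 2 := ⟨(t0 - 2).toNat, by omega⟩
  obtain ⟨c, rfl⟩ : ∃ c : ℕ, t1 = c + 2 := ⟨(t1 - 2).toNat, by omega⟩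
  have hc : ((c : ℤ) + 2 - 1).toNat = c + 1 := by omega
  rw [add_sub_cancel_right, add_sub_cancel_right, Int.toNat_natCast, Int.toNat_natCast, hc]
  constructor
  · have hL := ncf_neg_twos_with_two_entries a b c zero_le_one (k := a + 1) (by positivity)
    have hvalue : (a : ℚ) + (1 + (b + 1 + (a + 1 + (c + 2 : ℚ)⁻¹)⁻¹)⁻¹)⁻¹ =
        (-1 + (a + 1) * (b + 2) + (a + 1) ^ 2 * (b + 2) * (c + 2)) /
          (b + 2 + (c + 2) + (a + 1) * (b + 2) * (c + 2)) := by
      field_simp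
      ring
    rw [hvalue, inv_div, show -(1 + 2 : ℚ) = -3 by norm_num] at hL
    simpa using hL
  · have habs3 : |(-3 : ℤ) + 1| = 2 := by norm_num
    have habsp : |-((a : ℤ) + 1 + 2) + 1| = a + 2 := by rw [abs_of_neg] <;> omega
    rw [Nval_neg_twos_with_two_entries, habs3, habsp]
    ring
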